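/- arXiv:2104.12141 — 3 statements merged into one kernel-verified Lean document; each statement's English description precedes it below -/
import Mathlib

section
/- Let (X,d) be a metric space, μ a probability measure on X with finite support, c ∈ X, and V ⊆ X a set with μ(V) > 0. Put m = (1/μ(V))·Σ_{x∈V} μ(x)·d(x,c). Then for every nonempty finite subset C'' ⊆ X, Σ_{x} μ(x)·d(x,C'') ≥ max{0, d(c,C'') − 2m}·μ(V)/2, where d(y,C'') = min_{c''∈C''} d(y,c''). -/
open Metric
open scoped Classical

/-!
Markov's inequality would discard up to half of `V` and keep the points within `2m` of `c`.
Averaging loses less: `d(·, C'')` is `1`-Lipschitz, so `d(c, C'') - d(x, c) ≤ d(x, C'')`, and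
summing this over `V` already bounds the cost of `V` below by `(d(c, C'') - m) · μ(V)`.
-/

section LipschitzAverage

variable {X : Type*} [PseudoMetricSpace X] {f : X → ℝ} {K : NNReal} {w : X → ℝ}
  {s t : Finset X}

theorem sub_average_dist_mul_sum_le_sum_mul_of_lipschitzWith (hf : LipschitzWith K f)
    (hw : ∀ x ∈ t, 0 ≤ w x) (hw_sum : 0 < ∑ x ∈ t, w x) (c : X) :
    (f c - K * ((∑ x ∈ t, w x * dist x c) / ∑ x ∈ t, w x)) * ∑ x ∈ t, w x ≤
      ∑ x ∈ t, w x * f x := by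
  have apply_center_le (x : X) : f c - K * dist x c ≤ f x :=
    sub_le_iff_le_add.2 (dist_comm c x ▸ hf.le_add_mul c x)
  calc (f c - K * ((∑ x ∈ t, w x * dist x c) / ∑ x ∈ t, w x)) * ∑ x ∈ t, w x
      = f c * ∑ x ∈ t, w x - K * ∑ x ∈ t, w x * dist x c := by
        rw [sub_mul, mul_assoc, div_mul_cancel₀ _ hw_sum.ne']
    _ = ∑ x ∈ t, w x * (f c - K * dist x c) := by
        rw [Finset.mul_sum, Finset.mul_sum, ← Finset.sum_sub_distrib]
        exact Finset.sum_congr rfl fun x _ => by ring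
    _ ≤ ∑ x ∈ t, w x * f x :=
        Finset.sum_le_sum fun x hx => mul_le_mul_of_nonneg_left (apply_center_le x) (hw x hx)

theorem markov_cost_lower_bound_general (hf : LipschitzWith K f) (hf_nonneg : ∀ x ∈ s, 0 ≤ f x)
    (hw : ∀ x ∈ s, 0 ≤ w x) (hts : t ⊆ s) (hw_sum : 0 < ∑ x ∈ t, w x) (c : X) :
    max 0 (f c - K * ((∑ x ∈ t, w x * dist x c) / ∑ x ∈ t, w x)) * ∑ x ∈ t, w x ≤
      ∑ x ∈ s, w x * f x := by
  have cost_nonneg : ∀ x ∈ s, 0 ≤ w x * f x := fun x hx =>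
    mul_nonneg (hw x hx) (hf_nonneg x hx)
  rw [max_mul_of_nonneg _ _ hw_sum.le, zero_mul]
  refine max_le (Finset.sum_nonneg cost_nonneg) ?_
  exact (sub_average_dist_mul_sum_le_sum_mul_of_lipschitzWith hf
    (fun x hx => hw x (hts hx)) hw_sum c).trans
    (Finset.sum_le_sum_of_subset_of_nonneg hts fun x hx _ => cost_nonneg x hx)

end LipschitzAverage

theorem max_zero_sub_two_mul_mul_div_two_le {a m M : ℝ} (hm : 0 ≤ m) (hM : 0 ≤ M) :
    max 0 (a - 2 * m) * M / 2 ≤ max 0 (a - m) * M :=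
  calc max 0 (a - 2 * m) * M / 2
      ≤ max 0 (a - 2 * m) * M := half_le_self (mul_nonneg (le_max_left _ _) hM)
    _ ≤ max 0 (a - m) * M := by
        gcongr
        linarith

/-- Markov-type lower bound on the clustering cost: if `V` has measure
`μ(V) > 0` and `m` is the `μ`-average distance from `V` to `c`, then for any finite
nonempty center set `C''`, `Σ_x μ(x)·d(x,C'') ≥ max{0, d(c,C'') − 2m}·μ(V)/2`. -/
theorem markov_cost_lower_bound {X : Type*} [PseudoMetricSpace X]
    (μ : X →₀ ℝ) (hμ0 : ∀ x, 0 ≤ μ x) (hμ1 : ∑ x ∈ μ.support, μ x = 1)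
    (c : X) (V : Set X)
    (hV : 0 < ∑ x ∈ μ.support.filter (· ∈ V), μ x) :
    ∀ C'' : Finset X, C''.Nonempty →
      max 0 (infDist c (C'' : Set X) -
          2 * ((∑ x ∈ μ.support.filter (· ∈ V), μ x * dist x c) /
            (∑ x ∈ μ.support.filter (· ∈ V), μ x))) *
        (∑ x ∈ μ.support.filter (· ∈ V), μ x) / 2 ≤
      ∑ x ∈ μ.support, μ x * infDist x (C'' : Set X) := by
  intro C'' _
  have mean_dist_nonneg : 0 ≤ (∑ x ∈ μ.support.filter (· ∈ V), μ x * dist x c) /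
      ∑ x ∈ μ.support.filter (· ∈ V), μ x :=
    div_nonneg (Finset.sum_nonneg fun x _ => mul_nonneg (hμ0 x) dist_nonneg) hV.le
  refine (max_zero_sub_two_mul_mul_div_two_le mean_dist_nonneg hV.le).trans ?_
  simpa only [NNReal.coe_one, one_mul] using
    markov_cost_lower_bound_general (lipschitz_infDist_pt (C'' : Set X))
      (fun _ _ => infDist_nonneg) (fun x _ => hμ0 x) (Finset.filter_subset _ _) hV c
end

section
/- Let (X,d) be a metric space, C ⊆ X, k ≥ 1 an integer, and μ a probability measure on X with finite support. Suppose C* = {c*_1,…,c*_k} ⊆ C attains the minimum opt := cost_μ(C*) > 0 over all k-element subsets of C. Let v : supp(μ) → {1,…,k} assign to each point a nearest center of C*, put μ_i = μ(v^{-1}(i)) and, when μ_i > 0, m_i = (1/μ_i)·Σ_{x : v(x)=i} μ(x)·d(x,c*_i). Then for every x ∈ supp(μ) with i = v(x) and every α ∈ (0,1): sens(x) ≤ max{ (2m_i + d(x,c*_i)) / ((1−α)·opt), 2/(α·μ_i) }. -/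
open Metric
open scoped Classical

/-- Cost of a set of centers for a finitely supported probability measure `μ`. -/
noncomputable def kMedCost {X : Type*} [PseudoMetricSpace X] (μ : X →₀ ℝ)
    (C' : Finset X) : ℝ :=
  ∑ x ∈ μ.support, μ x * infDist x (C' : Set X)

/-- Sensitivity of a point for the `(k,C)`-median problem with respect to `μ`. -/
noncomputable def kMedSens {X : Type*} [PseudoMetricSpace X] (μ : X →₀ ℝ)
    (C : Set X) (k : ℕ) (x : X) : ℝ :=
  sSup {r : ℝ | ∃ C' : Finset X, ↑C' ⊆ C ∧ C'.card = k ∧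
    r = infDist x (C' : Set X) / kMedCost μ C'}

/-!
Average the triangle inequality `d(c, C') ≤ d(y, c) + d(y, C')` over a cluster `A` of mass `M`
whose mean distance from a point `c` is `m`. This gives `d(c, C') ≤ m + cost(C') / M`, so that
`d(x, C') ≤ (m + d(x, c)) + cost(C') / M` for every `x`. Dividing by `cost(C') ≥ opt` bounds the
sensitivity of `x` by `(m + d(x, c)) / opt + 1 / M`. The parameter `α` enters only at the end, in
`a + b = (1 - α) * (a / (1 - α)) + α * (b / α)`, a convex combination and hence at most the maximum
of `a / (1 - α)` and `b / α`.
-/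

section Cluster

variable {X : Type*} {μ : X →₀ ℝ} {A : Finset X}

/-- The admissible sets of centers for the `(k, C)`-median problem: the `k`-element subsets of
`C`. -/
def kCenterSets (C : Set X) (k : ℕ) : Set (Finset X) :=
  {C' | ↑C' ⊆ C ∧ C'.card = k}

lemma image_univ_mem_kCenterSets {ι : Type*} [Fintype ι] {c : ι → X} (hc : Function.Injective c)
    {C : Set X} (hmem : ∀ i, c i ∈ C) :
    Finset.univ.image c ∈ kCenterSets C (Fintype.card ι) := by
  refine ⟨?_, Finset.card_image_of_injective _ hc⟩
  rw [Finset.coe_image, Finset.coe_univ, Set.image_univ]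
  exact Set.range_subset_iff.mpr hmem

/-- The mass `μ(A)` of a cluster `A`, the paper's `μ_i`. The points of `A` need not lie in the
support of `μ`. -/
noncomputable def clusterMass (μ : X →₀ ℝ) (A : Finset X) : ℝ :=
  ∑ y ∈ A, μ y

lemma clusterMass_nonneg (hμ : ∀ y, 0 ≤ μ y) (A : Finset X) : 0 ≤ clusterMass μ A :=
  Finset.sum_nonneg fun y _ => hμ y

lemma clusterMass_pos (hμ : ∀ y, 0 ≤ μ y) {x : X} (hx : x ∈ μ.support) (hxA : x ∈ A) :
    0 < clusterMass μ A :=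
  Finset.sum_pos' (fun y _ => hμ y) ⟨x, hxA, (hμ x).lt_of_ne' (Finsupp.mem_support_iff.mp hx)⟩

variable [PseudoMetricSpace X]

/-- The `μ`-weighted mean distance from the points of a cluster `A` to a center `c`, the paper's
`m_i`; it is `0` if the cluster has mass `0`. -/
noncomputable def clusterMeanDist (μ : X →₀ ℝ) (A : Finset X) (c : X) : ℝ :=
  (∑ y ∈ A, μ y * dist y c) / clusterMass μ A

lemma clusterMeanDist_nonneg (hμ : ∀ y, 0 ≤ μ y) (A : Finset X) (c : X) :
    0 ≤ clusterMeanDist μ A c :=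
  div_nonneg (Finset.sum_nonneg fun y _ => mul_nonneg (hμ y) dist_nonneg) (clusterMass_nonneg hμ A)

lemma sum_mul_infDist_le_kMedCost (hμ : ∀ y, 0 ≤ μ y) (A C' : Finset X) :
    ∑ y ∈ A, μ y * infDist y (C' : Set X) ≤ kMedCost μ C' :=
  calc ∑ y ∈ A, μ y * infDist y (C' : Set X)
      ≤ ∑ y ∈ A ∪ μ.support, μ y * infDist y (C' : Set X) :=
        Finset.sum_le_sum_of_subset_of_nonneg Finset.subset_union_left
          fun y _ _ => mul_nonneg (hμ y) infDist_nonneg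
    _ = kMedCost μ C' :=
        (Finset.sum_subset Finset.subset_union_right fun y _ hy => by
          rw [Finsupp.notMem_support_iff.mp hy, zero_mul]).symm

lemma clusterMass_mul_infDist_le (hμ : ∀ y, 0 ≤ μ y) (A C' : Finset X) (c : X) :
    clusterMass μ A * infDist c (C' : Set X) ≤ ∑ y ∈ A, μ y * dist y c + kMedCost μ C' :=
  calc clusterMass μ A * infDist c (C' : Set X)
      = ∑ y ∈ A, μ y * infDist c (C' : Set X) := Finset.sum_mul ..
    _ ≤ ∑ y ∈ A, μ y * (dist y c + infDist y (C' : Set X)) := by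
        gcongr with y
        · exact hμ y
        · rw [add_comm, dist_comm]
          exact infDist_le_infDist_add_dist
    _ = ∑ y ∈ A, μ y * dist y c + ∑ y ∈ A, μ y * infDist y (C' : Set X) := by
        simp only [mul_add, Finset.sum_add_distrib]
    _ ≤ ∑ y ∈ A, μ y * dist y c + kMedCost μ C' := by
        gcongr
        exact sum_mul_infDist_le_kMedCost hμ A C'

lemma infDist_le_clusterMeanDist_add (hμ : ∀ y, 0 ≤ μ y) (hA : 0 < clusterMass μ A)
    (C' : Finset X) (c : X) :
    infDist c (C' : Set X) ≤ clusterMeanDist μ A c + kMedCost μ C' / clusterMass μ A := by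
  rw [clusterMeanDist, ← add_div, le_div_iff₀' hA]
  exact clusterMass_mul_infDist_le hμ A C' c

lemma infDist_div_kMedCost_le (hμ : ∀ y, 0 ≤ μ y) (hA : 0 < clusterMass μ A) {C' : Finset X}
    {b : ℝ} (hb : 0 < b) (hbC' : b ≤ kMedCost μ C') (c x : X) :
    infDist x (C' : Set X) / kMedCost μ C' ≤
      (clusterMeanDist μ A c + dist x c) / b + 1 / clusterMass μ A := by
  have hcost : 0 < kMedCost μ C' := hb.trans_le hbC'
  have hdist : 0 ≤ clusterMeanDist μ A c + dist x c :=
    add_nonneg (clusterMeanDist_nonneg hμ A c) dist_nonneg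
  calc infDist x (C' : Set X) / kMedCost μ C'
      ≤ (infDist c (C' : Set X) + dist x c) / kMedCost μ C' := by
        gcongr
        exact infDist_le_infDist_add_dist
    _ ≤ (clusterMeanDist μ A c + kMedCost μ C' / clusterMass μ A + dist x c) / kMedCost μ C' := by
        gcongr
        exact infDist_le_clusterMeanDist_add hμ hA C' c
    _ = (clusterMeanDist μ A c + dist x c) / kMedCost μ C' + 1 / clusterMass μ A := by
        field_simp
        ring
    _ ≤ (clusterMeanDist μ A c + dist x c) / b + 1 / clusterMass μ A := by
        gcongr

theorem sensitivity_bound_from_optimal_general (hμ : ∀ y, 0 ≤ μ y) (hA : 0 < clusterMass μ A)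
    {C : Set X} {k : ℕ} {opt : ℝ} (hoptpos : 0 < opt)
    (hopt : IsGLB (kMedCost μ '' kCenterSets C k) opt) (c x : X) :
    kMedSens μ C k x ≤ (clusterMeanDist μ A c + dist x c) / opt + 1 / clusterMass μ A := by
  obtain ⟨C₀, hC₀, hcard₀⟩ := hopt.nonempty.of_image
  refine csSup_le ⟨_, C₀, hC₀, hcard₀, rfl⟩ ?_
  rintro _ ⟨C', hC', hcard, rfl⟩
  exact infDist_div_kMedCost_le hμ hA hoptpos (hopt.1 (Set.mem_image_of_mem _ ⟨hC', hcard⟩)) c x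

end Cluster

section ConvexCombination

variable {𝕜 : Type*} [Field 𝕜] [LinearOrder 𝕜] [IsStrictOrderedRing 𝕜] {α : 𝕜}

lemma add_le_max_div (hα : α ∈ Set.Ioo 0 1) (a b : 𝕜) : a + b ≤ max (a / (1 - α)) (b / α) := by
  have hα' : 0 < 1 - α := sub_pos.mpr hα.2
  calc a + b = (1 - α) • (a / (1 - α)) + α • (b / α) := by
        rw [smul_eq_mul, smul_eq_mul, mul_div_cancel₀ _ hα'.ne', mul_div_cancel₀ _ hα.1.ne']
    _ ≤ max (a / (1 - α)) (b / α) :=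
        Convex.combo_le_max _ _ hα'.le hα.1.le (sub_add_cancel 1 α)

lemma div_add_one_div_le_max (hα : α ∈ Set.Ioo 0 1) {m r M : 𝕜} (hm : 0 ≤ m) (d : 𝕜)
    (hr : 0 ≤ r) (hM : 0 ≤ M) :
    (m + d) / r + 1 / M ≤ max ((2 * m + d) / ((1 - α) * r)) (2 / (α * M)) := by
  have hα0 : 0 < α := hα.1
  have hα' : 0 < 1 - α := sub_pos.mpr hα.2
  refine (add_le_max_div hα _ _).trans (max_le_max ?_ ?_)
  · rw [div_div, mul_comm r]
    gcongr
    exact le_mul_of_one_le_left hm one_le_two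
  · rw [div_div, mul_comm M]
    gcongr
    exact one_le_two

end ConvexCombination

/-- pointwise sensitivity bound in terms of an optimal solution
`C* = {c*_1, …, c*_k}`, for every `α ∈ (0,1)`. -/
theorem sensitivity_bound_from_optimal {X : Type*} [PseudoMetricSpace X]
    (C : Set X) (k : ℕ) (hk : 1 ≤ k) (μ : X →₀ ℝ) (hμ0 : ∀ x, 0 ≤ μ x)
    (hμ1 : ∑ x ∈ μ.support, μ x = 1)
    (cstar : Fin k → X) (hinj : Function.Injective cstar) (hmem : ∀ i, cstar i ∈ C)
    (hoptpos : 0 < kMedCost μ (Finset.image cstar Finset.univ))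
    (hopt : ∀ C' : Finset X, ↑C' ⊆ C → C'.card = k →
      kMedCost μ (Finset.image cstar Finset.univ) ≤ kMedCost μ C')
    (v : X → Fin k)
    (hv : ∀ x ∈ μ.support, ∀ i : Fin k, dist x (cstar (v x)) ≤ dist x (cstar i)) :
    ∀ x ∈ μ.support, ∀ α : ℝ, α ∈ Set.Ioo (0 : ℝ) 1 →
      kMedSens μ C k x ≤
        max ((2 * ((∑ y ∈ μ.support.filter (fun y => v y = v x), μ y * dist y (cstar (v x))) /
              (∑ y ∈ μ.support.filter (fun y => v y = v x), μ y)) + dist x (cstar (v x))) /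
            ((1 - α) * kMedCost μ (Finset.image cstar Finset.univ)))
          (2 / (α * ∑ y ∈ μ.support.filter (fun y => v y = v x), μ y)) := by
  intro x hx α hα
  have hleast : IsLeast (kMedCost μ '' kCenterSets C k)
      (kMedCost μ (Finset.image cstar Finset.univ)) :=
    ⟨Set.mem_image_of_mem _ <| by
        simpa only [Fintype.card_fin] using image_univ_mem_kCenterSets hinj hmem,
      Set.forall_mem_image.mpr fun C' hC' => hopt C' hC'.1 hC'.2⟩
  have hmass : 0 < clusterMass μ (μ.support.filter fun y => v y = v x) :=
    clusterMass_pos hμ0 hx (Finset.mem_filter.mpr ⟨hx, rfl⟩)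
  exact (sensitivity_bound_from_optimal_general hμ0 hmass hoptpos hleast.isGLB _ x).trans
    (div_add_one_div_le_max hα (clusterMeanDist_nonneg hμ0 _ _) _ hoptpos.le hmass.le)
end

section
/- Let δ ≥ 2 be a real number and n ≥ 2 an integer. Define the finite subsets of ℝ²: P_r = { ((j−1)δ, 0) : 1 ≤ j ≤ n }, and for each 1 ≤ i ≤ n, P_i = { ((j−1)δ, −1) : 1 ≤ j ≤ n, j ≠ i } ∪ { ((i−1)δ, 1) }. Then d_H(P_r, P_i) = 1 for every i ∈ {1,…,n}, and d_H(P_i, P_j) = 2 for all i ≠ j in {1,…,n}. -/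
noncomputable section

/-- The point `(a, b)` of the Euclidean plane. -/
def pt (a b : ℝ) : EuclideanSpace ℝ (Fin 2) :=
  (WithLp.equiv 2 (Fin 2 → ℝ)).symm ![a, b]

/-- `P_r = { ((j−1)δ, 0) : 1 ≤ j ≤ n }` (indexed here by `j = 0, …, n−1`). -/
def Pr (δ : ℝ) (n : ℕ) : Set (EuclideanSpace ℝ (Fin 2)) :=
  Set.range fun j : Fin n => pt ((j : ℝ) * δ) 0

/-- `P_i = { ((j−1)δ, −1) : j ≠ i } ∪ { ((i−1)δ, 1) }` (indexed by `j = 0, …, n−1`). -/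
def Pi' (δ : ℝ) (n : ℕ) (i : Fin n) : Set (EuclideanSpace ℝ (Fin 2)) :=
  {q | ∃ j : Fin n, j ≠ i ∧ q = pt ((j : ℝ) * δ) (-1)} ∪ {pt ((i : ℝ) * δ) 1}

/-!
Let `x i` be the abscissa of the `i`-th column. In each column the points of `P_r` and `P_i` differ
in height by `1`, and those of `P_i` and `P_j` by at most `2`, so matching column by column bounds
both distances from above. Matching the raised point of `P_i` with that of `P_j` instead, and
likewise the two vacated columns, gives the bound `|x i - x j|`. Conversely the raised point of
`P_i` is at vertical distance `2` from every point of `P_j` except the raised one, which is at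
distance `|x i - x j|`. Hence `d_H(P_i, P_j) = min 2 |x i - x j|` for arbitrary `x`.
-/

section IndexedFamilies

variable {ι X : Type*} [PseudoMetricSpace X]

theorem hausdorffDist_range_eq_of_dist_le_of_le_dist {f g : ι → X} {r : ℝ} {i : ι}
    (hle : ∀ k, dist (f k) (g k) ≤ r) (hge : ∀ k, r ≤ dist (f i) (g k)) :
    Metric.hausdorffDist (Set.range f) (Set.range g) = r := by
  have hr : 0 ≤ r := dist_nonneg.trans (hle i)
  have hfg : ∀ p ∈ Set.range f, ∃ q ∈ Set.range g, dist p q ≤ r :=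
    Set.forall_mem_range.2 fun k => ⟨g k, Set.mem_range_self k, hle k⟩
  have hgf : ∀ q ∈ Set.range g, ∃ p ∈ Set.range f, dist q p ≤ r :=
    Set.forall_mem_range.2 fun k =>
      ⟨f k, Set.mem_range_self k, (dist_comm (g k) (f k)).trans_le (hle k)⟩
  have hfin : Metric.hausdorffEDist (Set.range f) (Set.range g) ≠ ⊤ := by
    simp only [← edist_le_ofReal hr] at hfg hgf
    exact ne_top_of_le_ne_top ENNReal.ofReal_ne_top
      (Metric.hausdorffEDist_le_of_mem_edist hfg hgf)
  refine le_antisymm (Metric.hausdorffDist_le_of_mem_dist hr hfg hgf) ?_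
  calc r ≤ Metric.infDist (f i) (Set.range g) :=
        (Metric.le_infDist (Set.nonempty_of_mem (Set.mem_range_self i))).2
          (Set.forall_mem_range.2 hge)
    _ ≤ Metric.hausdorffDist (Set.range f) (Set.range g) :=
        Metric.infDist_le_hausdorffDist_of_mem (Set.mem_range_self i) hfin

theorem dist_apply_swap_le [DecidableEq ι] (x : ι → X) (i j k : ι) :
    dist (x k) (x (Equiv.swap i j k)) ≤ dist (x i) (x j) := by
  rcases eq_or_ne k i with rfl | hi
  · rw [Equiv.swap_apply_left]
  rcases eq_or_ne k j with rfl | hj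
  · rw [Equiv.swap_apply_right, dist_comm]
  · rw [Equiv.swap_apply_of_ne_of_ne hi hj, dist_self]
    exact dist_nonneg

end IndexedFamilies

theorem dist_pt (a b c d : ℝ) :
    dist (pt a b) (pt c d) = √(dist a c ^ 2 + dist b d ^ 2) := by
  simp [pt, EuclideanSpace.dist_eq, Fin.sum_univ_two]

theorem dist_pt_same_fst (a b d : ℝ) : dist (pt a b) (pt a d) = dist b d := by
  simp [dist_pt]

theorem dist_pt_same_snd (a b c : ℝ) : dist (pt a b) (pt c b) = dist a c := by
  simp [dist_pt]

theorem dist_snd_le_dist_pt (a b c d : ℝ) : dist b d ≤ dist (pt a b) (pt c d) := by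
  rw [dist_pt]
  exact Real.le_sqrt_of_sq_le (le_add_of_nonneg_left (sq_nonneg _))

section RaisedRows

variable {ι : Type*}

/-- The family underlying the paper's `P_r`, with arbitrary columns `x` in place of the
multiples of `δ`: one point at height `0` in each column. -/
def row (x : ι → ℝ) (k : ι) : EuclideanSpace ℝ (Fin 2) :=
  pt (x k) 0

variable [DecidableEq ι]

/-- The heights of the points of the paper's `P_i`: `1` at the index `i` and `-1` elsewhere. -/
def raisedHeight (i k : ι) : ℝ :=
  if k = i then 1 else -1

/-- The family underlying the paper's `P_i`, with arbitrary columns `x` in place of the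
multiples of `δ`. Indexing the points by their columns makes the column-by-column matching of
two such sets a comparison of families. -/
def raisedRow (x : ι → ℝ) (i k : ι) : EuclideanSpace ℝ (Fin 2) :=
  pt (x k) (raisedHeight i k)

theorem dist_zero_raisedHeight (i k : ι) : dist 0 (raisedHeight i k) = 1 := by
  unfold raisedHeight; split_ifs <;> simp

theorem dist_raisedHeight_le_two (i j k : ι) : dist (raisedHeight i k) (raisedHeight j k) ≤ 2 := by
  unfold raisedHeight; split_ifs <;> norm_num [Real.dist_eq]

theorem dist_raisedHeight_of_ne {j k : ι} (i : ι) (hk : k ≠ j) :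
    dist (raisedHeight i i) (raisedHeight j k) = 2 := by
  norm_num [raisedHeight, hk, Real.dist_eq]

theorem raisedHeight_swap (i j k : ι) :
    raisedHeight j (Equiv.swap i j k) = raisedHeight i k := by
  simp only [raisedHeight, Equiv.swap_apply_eq_iff, Equiv.swap_apply_right]

theorem dist_raisedRow_swap_le (x : ι → ℝ) (i j k : ι) :
    dist (raisedRow x i k) (raisedRow x j (Equiv.swap i j k)) ≤ dist (x i) (x j) := by
  rw [raisedRow, raisedRow, raisedHeight_swap, dist_pt_same_snd]
  exact dist_apply_swap_le x i j k

theorem min_le_dist_raisedRow (x : ι → ℝ) (i j k : ι) :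
    min 2 (dist (x i) (x j)) ≤ dist (raisedRow x i i) (raisedRow x j k) := by
  by_cases hk : k = j
  · subst hk
    exact (min_le_right _ _).trans_eq (by simp [raisedRow, raisedHeight, dist_pt_same_snd])
  · calc min 2 (dist (x i) (x j)) ≤ 2 := min_le_left _ _
      _ = dist (raisedHeight i i) (raisedHeight j k) := (dist_raisedHeight_of_ne i hk).symm
      _ ≤ dist (raisedRow x i i) (raisedRow x j k) := dist_snd_le_dist_pt _ _ _ _

theorem hausdorffDist_row_raisedRow (x : ι → ℝ) (i : ι) :
    Metric.hausdorffDist (Set.range (row x)) (Set.range (raisedRow x i)) = 1 :=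
  hausdorffDist_range_eq_of_dist_le_of_le_dist (i := i)
    (fun k => by rw [row, raisedRow, dist_pt_same_fst, dist_zero_raisedHeight])
    (fun k => (dist_zero_raisedHeight i k).symm.trans_le (dist_snd_le_dist_pt _ _ _ _))

theorem hausdorffDist_raisedRow_raisedRow (x : ι → ℝ) (i j : ι) :
    Metric.hausdorffDist (Set.range (raisedRow x i)) (Set.range (raisedRow x j)) =
      min 2 (dist (x i) (x j)) := by
  have hge := min_le_dist_raisedRow x i j
  rcases le_total 2 (dist (x i) (x j)) with h | h
  · rw [min_eq_left h] at hge ⊢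
    refine hausdorffDist_range_eq_of_dist_le_of_le_dist (fun k => ?_) hge
    rw [raisedRow, raisedRow, dist_pt_same_fst]
    exact dist_raisedHeight_le_two i j k
  · rw [min_eq_right h] at hge ⊢
    rw [← (Equiv.swap i j).surjective.range_comp (raisedRow x j)]
    exact hausdorffDist_range_eq_of_dist_le_of_le_dist (dist_raisedRow_swap_le x i j) fun k => hge _

theorem lower_bound_construction_distances_general (x : ι → ℝ) :
    (∀ i, Metric.hausdorffDist (Set.range (row x)) (Set.range (raisedRow x i)) = 1) ∧
    (∀ i j, Metric.hausdorffDist (Set.range (raisedRow x i)) (Set.range (raisedRow x j)) =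
      min 2 (dist (x i) (x j))) :=
  ⟨hausdorffDist_row_raisedRow x, hausdorffDist_raisedRow_raisedRow x⟩

end RaisedRows

theorem Pr_eq_range_row (δ : ℝ) (n : ℕ) :
    Pr δ n = Set.range (row fun j : Fin n => (j : ℝ) * δ) :=
  rfl

theorem Pi'_eq_range_raisedRow (δ : ℝ) (n : ℕ) (i : Fin n) :
    Pi' δ n i = Set.range (raisedRow (fun j : Fin n => (j : ℝ) * δ) i) := by
  ext q
  constructor
  · rintro (⟨j, hj, rfl⟩ | rfl)
    · exact ⟨j, by simp [raisedRow, raisedHeight, hj]⟩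
    · exact ⟨i, by simp [raisedRow, raisedHeight]⟩
  · rintro ⟨j, rfl⟩
    by_cases hj : j = i
    · exact Or.inr (by simp [raisedRow, raisedHeight, hj])
    · exact Or.inl ⟨j, hj, by simp [raisedRow, raisedHeight, hj]⟩

theorem le_dist_natCast_mul {k l : ℕ} (hkl : k ≠ l) (δ : ℝ) :
    δ ≤ dist ((k : ℝ) * δ) ((l : ℝ) * δ) :=
  calc δ ≤ |δ| := le_abs_self δ
    _ ≤ dist (k : ℝ) l * |δ| :=
        le_mul_of_one_le_left (abs_nonneg δ) (Nat.dist_cast_real k l ▸ Nat.pairwise_one_le_dist hkl)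
    _ = dist ((k : ℝ) * δ) ((l : ℝ) * δ) := by
        rw [Real.dist_eq, Real.dist_eq, ← abs_mul, sub_mul]

/-- in the lower-bound construction, `d_H(P_r, P_i) = 1` for all `i`, and
`d_H(P_i, P_j) = 2` for all `i ≠ j`. -/
theorem lower_bound_construction_distances (δ : ℝ) (hδ : 2 ≤ δ) (n : ℕ) (hn : 2 ≤ n) :
    (∀ i : Fin n, Metric.hausdorffDist (Pr δ n) (Pi' δ n i) = 1) ∧
    (∀ i j : Fin n, i ≠ j → Metric.hausdorffDist (Pi' δ n i) (Pi' δ n j) = 2) := by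
  simp only [Pr_eq_range_row, Pi'_eq_range_raisedRow]
  refine (lower_bound_construction_distances_general _).imp_right fun h i j hij => ?_
  rw [h i j, min_eq_left (hδ.trans (le_dist_natCast_mul (Fin.val_ne_of_ne hij) δ))]
end
end
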